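/- Assume V ∈ C¹(ℝ^N), c ∈ ℝ, condition (V^c) and the coercivity condition (1.7). If q ∈ ℳ_c, then ½|q̇(t)|² − V(q(t)) = −c for all t ∈ (α_q, ω_q). -/

import Mathlib

open MeasureTheory Filter Metric Set Topology
open scoped ENNReal

noncomputable section

abbrev Euc (N : ℕ) := EuclideanSpace ℝ (Fin N)

def setDist {E : Type*} [PseudoMetricSpace E] (A B : Set E) : ℝ :=
  sInf ((fun p : E × E => dist p.1 p.2) '' (A ×ˢ B))

def IsH1loc {N : ℕ} (q q' : ℝ → Euc N) : Prop :=
  LocallyIntegrable q' volume ∧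
  (∀ a b : ℝ, IntegrableOn (fun t => ‖q' t‖ ^ 2) (Icc a b) volume) ∧
  (∀ a b : ℝ, q b - q a = ∫ t in a..b, q' t)

def lagJ {N : ℕ} (V : Euc N → ℝ) (c : ℝ) (q q' : ℝ → Euc N) (I : Set ℝ) : ℝ≥0∞ :=
  ∫⁻ t in I, ENNReal.ofReal (2⁻¹ * ‖q' t‖ ^ 2 + (V (q t) - c))

def Gamma {N : ℕ} (V : Euc N → ℝ) (c : ℝ) (Vm Vp : Set (Euc N)) :
    Set ((ℝ → Euc N) × (ℝ → Euc N)) :=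
  {p | IsH1loc p.1 p.2 ∧ (∀ t, c ≤ V (p.1 t)) ∧
    (∀ ε > 0, ∃ᶠ t in atBot, infDist (p.1 t) Vm < ε) ∧
    (∀ ε > 0, ∃ᶠ t in atTop, infDist (p.1 t) Vp < ε)}

def mc {N : ℕ} (V : Euc N → ℝ) (c : ℝ) (Vm Vp : Set (Euc N)) : ℝ≥0∞ :=
  ⨅ (p) (_ : p ∈ Gamma V c Vm Vp), lagJ V c p.1 p.2 univ

def Coercive {N : ℕ} (V : Euc N → ℝ) (c : ℝ) (Vm Vp : Set (Euc N)) (R : ℝ) : Prop :=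
  mc V c Vm Vp =
    ⨅ (p) (_ : p ∈ Gamma V c Vm Vp) (_ : ∀ t, ‖p.1 t‖ ≤ R), lagJ V c p.1 p.2 univ

/-- `ρ₀ := (1/4)·dist(𝒱⁻ ∩ B̄_R(0), 𝒱⁺ ∩ B̄_R(0))`. -/
def rho0 {N : ℕ} (Vm Vp : Set (Euc N)) (R : ℝ) : ℝ :=
  (1 / 4) * setDist (Vm ∩ closedBall 0 R) (Vp ∩ closedBall 0 R)

/-- membership in `ℳ_c`. -/
def MemM {N : ℕ} (V : Euc N → ℝ) (c : ℝ) (Vm Vp : Set (Euc N)) (R : ℝ)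
    (q q' : ℝ → Euc N) : Prop :=
  (q, q') ∈ Gamma V c Vm Vp ∧
  infDist (q 0) {x | V x ≤ c} = rho0 Vm Vp R ∧
  lagJ V c q q' univ = mc V c Vm Vp ∧
  (∀ t, ‖q t‖ ≤ R)

/-- `α_q` (valued in `[-∞,+∞]`, with `−∞` when `q(ℝ) ∩ 𝒱⁻ = ∅`). -/
def alphaQ {N : ℕ} (Vm : Set (Euc N)) (q : ℝ → Euc N) : EReal :=
  sSup {x : EReal | ∃ t : ℝ, x = (t : EReal) ∧ q t ∈ Vm}

/-- `ω_q` (valued in `[-∞,+∞]`, with `+∞` when there is no `t > α_q` with `q(t) ∈ 𝒱⁺`). -/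
def omegaQ {N : ℕ} (Vm Vp : Set (Euc N)) (q : ℝ → Euc N) : EReal :=
  sInf {x : EReal | ∃ t : ℝ, x = (t : EReal) ∧ alphaQ Vm q < (t : EReal) ∧ q t ∈ Vp}

/-- reflection of `q` with respect to `b` (used for `t > b`). -/
def reflPlus {N : ℕ} (q : ℝ → Euc N) (b : ℝ) : ℝ → Euc N :=
  fun t => if t ≤ b then q t else q (2 * b - t)

/-- reflection of `q` with respect to `a` (used for `t < a`). -/
def reflMinus {N : ℕ} (q : ℝ → Euc N) (a : ℝ) : ℝ → Euc N :=
  fun t => if a ≤ t then q t else q (2 * a - t)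

/-- ω-limit set `Ω_q := ⋂_{t > α_q} closure {q(s) : s ≥ t}`. -/
def omegaLimitSet {N : ℕ} (Vm : Set (Euc N)) (q : ℝ → Euc N) : Set (Euc N) :=
  ⋂ (t : ℝ) (_ : alphaQ Vm q < (t : EReal)), closure (q '' Ici t)

/-- α-limit set `𝒜_q := ⋂_{t < ω_q} closure {q(s) : s ≤ t}`. -/
def alphaLimitSet {N : ℕ} (Vm Vp : Set (Euc N)) (q : ℝ → Euc N) : Set (Euc N) :=
  ⋂ (t : ℝ) (_ : (t : EReal) < omegaQ Vm Vp q), closure (q '' Iic t)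

/-!
The minimum `m_c` is finite: the curve `q` comes closer to `𝒱⁻` and to `𝒱⁺` than the distance
between these sets, so straight segments, stopped where they first meet the level `V = c`, complete
an arc of `q` to a connection that rests at zero cost outside a bounded time interval. Hence, by
cutting and pasting, every arc of `q` has least action among the arcs in `{V ≥ c}` with the same
end points, *whatever time they take*.

Running an arc with kinetic part `K = ∫ ½|q'|²` and potential part `P = ∫ (V(q) - c)` at speed `k`
changes its action to `k K + P / k`. The minimum over `k` is at `k = 1`, so `K = P` on every
interval. Where `V(q) > c`, small variations of `q` remain admissible, and the first variation
together with the du Bois-Reymond lemma shows that `q` is `C¹` there. Differentiating `K = P` with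
respect to the end of the interval then gives the energy identity at every such time.
-/

section FirstHit

variable {α δ : Type*} [ConditionallyCompleteLinearOrder α] [TopologicalSpace α] [OrderTopology α]
  [DenselyOrdered α] [LinearOrder δ] [TopologicalSpace δ] [OrderClosedTopology δ]

theorem exists_first_hit {u : α → δ} {a b : α} {c : δ} (hab : a ≤ b)
    (hu : ContinuousOn u (Icc a b)) (ha : c ≤ u a) (hb : u b ≤ c) :
    ∃ s ∈ Icc a b, u s = c ∧ ∀ t ∈ Icc a s, c ≤ u t := by
  have hcompact : IsCompact (Icc a b ∩ u ⁻¹' {c}) :=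
    isCompact_Icc.of_isClosed_subset (hu.preimage_isClosed_of_isClosed isClosed_Icc
      isClosed_singleton) inter_subset_left
  obtain ⟨s₀, hs₀, hus₀⟩ := intermediate_value_Icc' hab hu ⟨hb, ha⟩
  obtain ⟨s, ⟨hs, hus⟩, hleast⟩ := hcompact.exists_isLeast ⟨s₀, hs₀, hus₀⟩
  refine ⟨s, hs, hus, fun t ht => ?_⟩
  by_contra! hut
  obtain ⟨r, hr, hur⟩ := intermediate_value_Icc' ht.1
    (hu.mono (Icc_subset_Icc_right (ht.2.trans hs.2))) ⟨hut.le, ha⟩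
  have hsr : s ≤ r := hleast ⟨⟨hr.1, hr.2.trans (ht.2.trans hs.2)⟩, hur⟩
  obtain rfl : t = s := le_antisymm ht.2 (hsr.trans hr.2)
  exact hut.ne hus

end FirstHit

theorem eq_of_forall_add_le_mul_add_inv_mul {x y : ℝ}
    (h : ∀ k : ℝ, 0 < k → x + y ≤ k * x + k⁻¹ * y) : x = y := by
  have hmin : IsLocalMin (fun k : ℝ => k * x + k⁻¹ * y) 1 := by
    filter_upwards [lt_mem_nhds one_pos] with k hk
    simpa using h k hk
  have hderiv : HasDerivAt (fun k : ℝ => k * x + k⁻¹ * y) (x - y) 1 := by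
    simpa [sub_eq_add_neg] using
      ((hasDerivAt_id' (1 : ℝ)).mul_const x).fun_add ((hasDerivAt_inv one_ne_zero).mul_const y)
  exact sub_eq_zero.1 (hmin.hasDerivAt_eq_zero hderiv)

theorem intervalIntegrable_comp_mul_add {E : Type*} [NormedAddCommGroup E] {f : ℝ → E} {k : ℝ}
    (hk : k ≠ 0) (d : ℝ) {a b : ℝ}
    (hf : IntervalIntegrable f volume (k * a + d) (k * b + d)) :
    IntervalIntegrable (fun t => f (k * t + d)) volume a b := by
  simpa [hk] using (hf.comp_add_right d).comp_mul_left (c := k)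

section WeakDerivative

variable {E : Type*} [NormedAddCommGroup E] [NormedSpace ℝ E] [CompleteSpace E] {f w : ℝ → E}
  {a b : ℝ}

theorem ae_eq_average_of_forall_integral_smul_eq_zero (hab : a < b)
    (hf : IntervalIntegrable f volume a b)
    (h : ∀ η : ℝ → ℝ, Continuous η → ∫ t in a..b, η t = 0 → ∫ t in a..b, η t • f t = 0) :
    ∀ᵐ t, t ∈ Ioo a b → f t = (b - a)⁻¹ • ∫ s in a..b, f s := by
  set m : E := (b - a)⁻¹ • ∫ s in a..b, f s with hm
  have hfm : LocallyIntegrableOn (fun t => f t - m) (Ioo a b) :=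
    (((intervalIntegrable_iff_integrableOn_Ioo_of_le hab.le).1 hf).sub
      (integrableOn_const (by simp))).locallyIntegrableOn
  have hzero : ∀ᵐ t, t ∈ Ioo a b → f t - m = 0 := by
    refine isOpen_Ioo.ae_eq_zero_of_integral_contDiff_smul_eq_zero hfm fun g hg _ hsupp => ?_
    have hg : Continuous g := hg.continuous
    have hgi : IntervalIntegrable g volume a b := hg.intervalIntegrable a b
    have hgf : IntervalIntegrable (fun t => g t • f t) volume a b :=
      hf.continuousOn_smul hg.continuousOn
    have hgm : IntervalIntegrable (fun t => g t • m) volume a b :=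
      (hg.smul continuous_const).intervalIntegrable a b
    set μ : ℝ := (b - a)⁻¹ * ∫ s in a..b, g s with hμ
    have hμf : IntervalIntegrable (fun t => μ • f t) volume a b := hf.smul μ
    have hmean : ∫ t in a..b, (g t - μ) = 0 := by
      rw [intervalIntegral.integral_sub hgi intervalIntegrable_const,
        intervalIntegral.integral_const, hμ, smul_eq_mul,
        mul_inv_cancel_left₀ (sub_pos.2 hab).ne', sub_self]
    calc ∫ t, g t • (f t - m) = ∫ t in a..b, g t • (f t - m) := by
          rw [intervalIntegral.integral_of_le hab.le, integral_Ioc_eq_integral_Ioo,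
            setIntegral_eq_integral_of_forall_compl_eq_zero]
          intro t ht
          rw [image_eq_zero_of_notMem_tsupport fun hmem => ht (hsupp hmem), zero_smul]
      _ = (∫ t in a..b, g t • f t) - (∫ t in a..b, g t) • m := by
          simp only [smul_sub]
          rw [intervalIntegral.integral_sub hgf hgm, intervalIntegral.integral_smul_const]
      _ = ∫ t in a..b, (g t - μ) • f t := by
          simp only [sub_smul]
          rw [intervalIntegral.integral_sub hgf hμf, intervalIntegral.integral_smul,
            hm, hμ, smul_smul, mul_comm]
      _ = 0 := h _ (hg.sub continuous_const) hmean
  filter_upwards [hzero] with t ht htab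
  exact sub_eq_zero.1 (ht htab)

theorem exists_ae_eq_const_add_integral_of_weak_deriv (hab : a < b)
    (hf : IntervalIntegrable f volume a b) (hw : Continuous w)
    (h : ∀ φ η : ℝ → ℝ, Continuous η → (∀ t, HasDerivAt φ (η t) t) → φ a = 0 → φ b = 0 →
      (∫ t in a..b, η t • f t) + ∫ t in a..b, φ t • w t = 0) :
    ∃ m : E, ∀ᵐ t, t ∈ Ioo a b → f t = m + ∫ s in a..t, w s := by
  set W : ℝ → E := fun t => ∫ s in a..t, w s
  have hWd : ∀ t, HasDerivAt W (w t) t := fun t => hw.integral_hasStrictDerivAt a t |>.hasDerivAt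
  have hWc : Continuous W := continuous_iff_continuousAt.2 fun t => (hWd t).continuousAt
  have hortho : ∀ η : ℝ → ℝ, Continuous η → ∫ t in a..b, η t = 0 →
      ∫ t in a..b, η t • (f t - W t) = 0 := by
    intro η hη hη0
    set φ : ℝ → ℝ := fun t => ∫ s in a..t, η s
    have hφd : ∀ t, HasDerivAt φ (η t) t := fun t =>
      hη.integral_hasStrictDerivAt a t |>.hasDerivAt
    have hφa : φ a = 0 := intervalIntegral.integral_same
    have hparts : ∫ t in a..b, φ t • w t = -∫ t in a..b, η t • W t := by
      rw [intervalIntegral.integral_smul_deriv_eq_deriv_smul (fun t _ => hφd t)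
        (fun t _ => hWd t) (hη.intervalIntegrable a b) (hw.intervalIntegrable a b), hφa,
        show φ b = 0 from hη0]
      simp
    have hηf : IntervalIntegrable (fun t => η t • f t) volume a b :=
      hf.continuousOn_smul hη.continuousOn
    have hηW : IntervalIntegrable (fun t => η t • W t) volume a b :=
      (hη.smul hWc).intervalIntegrable a b
    simp only [smul_sub]
    rw [intervalIntegral.integral_sub hηf hηW, sub_eq_add_neg, ← hparts]
    exact h φ η hη hφd hφa hη0
  exact ⟨_, (ae_eq_average_of_forall_integral_smul_eq_zero hab
    (hf.sub (hWc.intervalIntegrable a b)) hortho).mono fun t ht htab =>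
      sub_eq_iff_eq_add.1 (ht htab)⟩

theorem hasDerivAt_integral_of_ae_eq {t : ℝ} (hw : Continuous w)
    (hfw : ∀ᵐ s, s ∈ Ioo a b → f s = w s) (ht : t ∈ Ioo a b) :
    HasDerivAt (fun x => ∫ s in a..x, f s) (w t) t := by
  refine (hw.integral_hasStrictDerivAt a t).hasDerivAt.congr_of_eventuallyEq ?_
  filter_upwards [Ioo_mem_nhds ht.1 ht.2] with x hx
  refine intervalIntegral.integral_congr_ae (hfw.mono fun s hs hsx => hs ?_)
  rw [uIoc_of_le hx.1.le] at hsx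
  exact ⟨hsx.1, hsx.2.trans_lt hx.2⟩

end WeakDerivative

section VariationFormulas

theorem continuous_gradient_of_contDiff {F : Type*} [NormedAddCommGroup F]
    [InnerProductSpace ℝ F] [CompleteSpace F] {U : F → ℝ} (hU : ContDiff ℝ 1 U) :
    Continuous (gradient U) :=
  (InnerProductSpace.toDual ℝ F).symm.continuous.comp (hU.continuous_fderiv one_ne_zero)

theorem integrable_inner_of_memLp_two {α E : Type*} [MeasurableSpace α] {μ : Measure α}
    [NormedAddCommGroup E] [InnerProductSpace ℝ E] {f g : α → E} (hf : MemLp f 2 μ)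
    (hg : MemLp g 2 μ) : Integrable (fun x => inner ℝ (f x) (g x)) μ :=
  (hf.norm.integrable_mul hg.norm).mono' (hf.1.inner hg.1)
    (.of_forall fun x => norm_inner_le_norm (f x) (g x))

theorem hasDerivAt_integral_norm_add_smul_sq {α E : Type*} [MeasurableSpace α]
    {μ : Measure α} [NormedAddCommGroup E] [InnerProductSpace ℝ E] {f g : α → E}
    (hf : MemLp f 2 μ) (hg : MemLp g 2 μ) :
    HasDerivAt (fun s : ℝ => ∫ x, 2⁻¹ * ‖f x + s • g x‖ ^ 2 ∂μ)
      (∫ x, inner ℝ (f x) (g x) ∂μ) 0 := by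
  have hexpand : ∀ s : ℝ, ∫ x, 2⁻¹ * ‖f x + s • g x‖ ^ 2 ∂μ =
      (∫ x, 2⁻¹ * ‖f x‖ ^ 2 ∂μ) + s * (∫ x, inner ℝ (f x) (g x) ∂μ)
        + s ^ 2 * ∫ x, 2⁻¹ * ‖g x‖ ^ 2 ∂μ := by
    intro s
    have hff : Integrable (fun x => 2⁻¹ * ‖f x‖ ^ 2) μ :=
      (hf.integrable_norm_pow two_ne_zero).const_mul _
    have hgg : Integrable (fun x => s ^ 2 * (2⁻¹ * ‖g x‖ ^ 2)) μ :=
      ((hg.integrable_norm_pow two_ne_zero).const_mul _).const_mul _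
    have hfg : Integrable (fun x => s * inner ℝ (f x) (g x)) μ :=
      (integrable_inner_of_memLp_two hf hg).const_mul s
    have hsum : Integrable (fun x => 2⁻¹ * ‖f x‖ ^ 2 + s * inner ℝ (f x) (g x)) μ := hff.add hfg
    rw [← integral_const_mul, ← integral_const_mul, ← integral_add hff hfg, ← integral_add hsum hgg]
    refine integral_congr_ae (.of_forall fun x => ?_)
    simp only [norm_add_sq_real, inner_smul_right, norm_smul, mul_pow,
      Real.norm_eq_abs, sq_abs]
    ring
  simp only [hexpand]
  simpa using (((hasDerivAt_id' (0 : ℝ)).mul_const _).const_add _).fun_add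
    (((hasDerivAt_id' (0 : ℝ)).fun_pow 2).mul_const (∫ x, 2⁻¹ * ‖g x‖ ^ 2 ∂μ))

theorem hasDerivAt_intervalIntegral_comp_add_smul {E F : Type*} [NormedAddCommGroup E]
    [NormedSpace ℝ E] [NormedAddCommGroup F] [NormedSpace ℝ F] {U : E → F}
    (hU : ContDiff ℝ 1 U) {q φ : ℝ → E} (hq : Continuous q) (hφ : Continuous φ) (a b : ℝ) :
    HasDerivAt (fun s : ℝ => ∫ t in a..b, U (q t + s • φ t))
      (∫ t in a..b, fderiv ℝ U (q t) (φ t)) 0 := by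
  have hUc : Continuous U := hU.continuous
  have hdU : Continuous fun z : ℝ × ℝ => fderiv ℝ U (q z.2 + z.1 • φ z.2) (φ z.2) :=
    ((hU.continuous_fderiv one_ne_zero).comp (by fun_prop)).clm_apply (by fun_prop)
  have hdU₀ : Continuous fun t => fderiv ℝ U (q t + (0 : ℝ) • φ t) (φ t) :=
    hdU.comp (by fun_prop : Continuous fun t : ℝ => ((0 : ℝ), t))
  obtain ⟨C, hC⟩ := ((isCompact_Icc (a := (-1 : ℝ)) (b := 1)).prod
    (isCompact_uIcc (a := a) (b := b))).exists_bound_of_continuousOn hdU.continuousOn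
  have hderiv : ∀ s t : ℝ, HasDerivAt (fun s : ℝ => U (q t + s • φ t))
      (fderiv ℝ U (q t + s • φ t) (φ t)) s := fun s t => by
    have hline : HasDerivAt (fun s : ℝ => q t + s • φ t) (φ t) s := by
      simpa using ((hasDerivAt_id s).smul_const (φ t)).const_add (q t)
    exact (hU.differentiable one_ne_zero _).hasFDerivAt.comp_hasDerivAt s hline
  simpa using (intervalIntegral.hasDerivAt_integral_of_dominated_loc_of_deriv_le
    (bound := fun _ => C) (Icc_mem_nhds (by norm_num) (by norm_num))
    (.of_forall fun s => Continuous.aestronglyMeasurable (by fun_prop))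
    (Continuous.intervalIntegrable (by fun_prop) a b) hdU₀.aestronglyMeasurable
    (.of_forall fun t ht s hs => hC (s, t) ⟨hs, uIoc_subset_uIcc ht⟩)
    intervalIntegrable_const (.of_forall fun t _ s _ => hderiv s t)).2

end VariationFormulas

namespace IsH1loc

variable {N : ℕ} {q q' r r' : ℝ → Euc N}

theorem intervalIntegrable (h : IsH1loc q q') (a b : ℝ) : IntervalIntegrable q' volume a b :=
  (h.1.integrableOn_isCompact isCompact_uIcc).intervalIntegrable

theorem intervalIntegrable_norm_sq (h : IsH1loc q q') (a b : ℝ) :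
    IntervalIntegrable (fun t => ‖q' t‖ ^ 2) volume a b :=
  IntegrableOn.intervalIntegrable (h.2.1 _ _)

theorem memLp_two (h : IsH1loc q q') (a b : ℝ) : MemLp q' 2 (volume.restrict (Icc a b)) :=
  (memLp_two_iff_integrable_sq_norm h.1.aestronglyMeasurable.restrict).2 (h.2.1 a b)

theorem memLp_two_Ioc (h : IsH1loc q q') (a b : ℝ) : MemLp q' 2 (volume.restrict (Ioc a b)) :=
  (h.memLp_two a b).mono_measure (Measure.restrict_mono Ioc_subset_Icc_self le_rfl)

theorem eq_add_integral (h : IsH1loc q q') (a b : ℝ) : q b = q a + ∫ t in a..b, q' t :=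
  eq_add_of_sub_eq' (h.2.2 a b)

theorem continuous (h : IsH1loc q q') : Continuous q := by
  rw [funext (h.eq_add_integral 0)]
  exact continuous_const.add (intervalIntegral.continuous_primitive h.intervalIntegrable 0)

theorem of_memLp_two (hq' : ∀ a b, MemLp q' 2 (volume.restrict (Icc a b))) (τ : ℝ)
    (hq : ∀ b, q b - q τ = ∫ t in τ..b, q' t) : IsH1loc q q' := by
  have hint : ∀ a b, IntervalIntegrable q' volume a b := fun a b =>
    IntegrableOn.intervalIntegrable ((hq' _ _).integrable one_le_two)
  refine ⟨fun t => ⟨Icc (t - 1) (t + 1), Icc_mem_nhds (by linarith) (by linarith),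
    (hq' _ _).integrable one_le_two⟩, fun a b => (hq' a b).integrable_norm_pow two_ne_zero,
    fun a b => ?_⟩
  rw [← intervalIntegral.integral_interval_sub_left (hint τ b) (hint τ a), ← hq, ← hq,
    sub_sub_sub_cancel_right]

theorem of_hasDerivAt (hq : ∀ t, HasDerivAt q (q' t) t) (hq' : Continuous q') : IsH1loc q q' :=
  .of_memLp_two (fun _ _ => (memLp_two_iff_integrable_sq_norm
    hq'.aestronglyMeasurable).2 (hq'.norm.pow 2).integrableOn_Icc) 0 fun b =>
      (intervalIntegral.integral_eq_sub_of_hasDerivAt (fun t _ => hq t)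
        (hq'.intervalIntegrable 0 b)).symm

theorem const (x : Euc N) : IsH1loc (fun _ => x) (fun _ => 0) :=
  .of_hasDerivAt (fun _ => hasDerivAt_const _ _) continuous_const

theorem add_smul (hq : IsH1loc q q') (hr : IsH1loc r r') (s : ℝ) :
    IsH1loc (fun t => q t + s • r t) (fun t => q' t + s • r' t) := by
  refine .of_memLp_two (fun a b => (hq.memLp_two a b).add ((hr.memLp_two a b).const_smul s)) 0
    fun b => ?_
  have hs : IntervalIntegrable (fun t => s • r' t) volume 0 b := (hr.intervalIntegrable 0 b).smul s
  rw [intervalIntegral.integral_add (hq.intervalIntegrable 0 b) hs, intervalIntegral.integral_smul,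
    ← hq.2.2, ← hr.2.2, smul_sub, add_sub_add_comm]

theorem comp_mul_add (hq : IsH1loc q q') {k : ℝ} (hk : k ≠ 0) (d : ℝ) :
    IsH1loc (fun t => q (k * t + d)) (fun t => k • q' (k * t + d)) := by
  refine .of_memLp_two (fun a b => ?_) 0 fun b => ?_
  · rcases le_or_gt a b with hab | hab
    · have hint : IntegrableOn (fun t => q' (k * t + d)) (Icc a b) :=
        (intervalIntegrable_iff_integrableOn_Icc_of_le hab).1
          (intervalIntegrable_comp_mul_add hk d (hq.intervalIntegrable _ _))
      have hsq : IntegrableOn (fun t => ‖q' (k * t + d)‖ ^ 2) (Icc a b) :=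
        (intervalIntegrable_iff_integrableOn_Icc_of_le hab).1
          (intervalIntegrable_comp_mul_add hk d (hq.intervalIntegrable_norm_sq _ _))
      exact ((memLp_two_iff_integrable_sq_norm hint.aestronglyMeasurable).2 hsq).const_smul k
    · simp [Icc_eq_empty_of_lt hab]
  · rw [intervalIntegral.integral_smul, intervalIntegral.smul_integral_comp_mul_add, hq.2.2]

theorem comp_add_right (hq : IsH1loc q q') (d : ℝ) :
    IsH1loc (fun t => q (t + d)) (fun t => q' (t + d)) := by
  simpa using hq.comp_mul_add one_ne_zero d

theorem piecewise_Iic (hq : IsH1loc q q') (hr : IsH1loc r r') {τ : ℝ} (hτ : q τ = r τ) :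
    IsH1loc ((Iic τ).piecewise q r) ((Iic τ).piecewise q' r') := by
  refine .of_memLp_two (fun a b => .piecewise measurableSet_Iic ((hq.memLp_two a b).restrict _)
    ((hr.memLp_two a b).restrict _)) τ fun b => ?_
  rcases le_or_gt b τ with hb | hb
  · rw [piecewise_eq_of_mem _ _ _ (mem_Iic.2 hb), piecewise_eq_of_mem _ _ _ self_mem_Iic, hq.2.2]
    refine intervalIntegral.integral_congr_uIoo fun t ht => ?_
    rw [piecewise_eq_of_mem]
    exact (uIoo_of_ge hb ▸ ht).2.le
  · rw [piecewise_eq_of_notMem _ _ _ (notMem_Iic.2 hb), piecewise_eq_of_mem _ _ _ self_mem_Iic,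
      hτ, hr.2.2]
    refine intervalIntegral.integral_congr_uIoo fun t ht => ?_
    rw [piecewise_eq_of_notMem]
    exact notMem_Iic.2 (uIoo_of_le hb.le ▸ ht).1

end IsH1loc

section Splice

variable {E : Type*} {a b : ℝ} {f r g : ℝ → E}

/-- The curve that follows `f` up to time `a`, then `r` up to time `b`, then `g`; it is meant for
`a ≤ b`. -/
def splice (a b : ℝ) (f r g : ℝ → E) : ℝ → E :=
  (Iic a).piecewise f ((Iic b).piecewise r g)

theorem splice_eqOn_Iic : EqOn (splice a b f r g) f (Iic a) :=
  piecewise_eqOn _ _ _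

theorem splice_eqOn_Ioc : EqOn (splice a b f r g) r (Ioc a b) := fun t ht => by
  rw [splice, piecewise_eq_of_notMem _ _ _ (notMem_Iic.2 ht.1),
    piecewise_eq_of_mem _ _ _ (mem_Iic.2 ht.2)]

theorem splice_eqOn_Ioi (hab : a ≤ b) : EqOn (splice a b f r g) g (Ioi b) := fun t ht => by
  rw [splice, piecewise_eq_of_notMem _ _ _ (notMem_Iic.2 (hab.trans_lt ht)),
    piecewise_eq_of_notMem _ _ _ (notMem_Iic.2 ht)]

theorem IsH1loc.splice {N : ℕ} {f f' r r' g g' : ℝ → Euc N} (hab : a ≤ b) (hf : IsH1loc f f')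
    (hr : IsH1loc r r') (hg : IsH1loc g g') (hfr : f a = r a) (hrg : r b = g b) :
    IsH1loc (splice a b f r g) (splice a b f' r' g') :=
  hf.piecewise_Iic (hr.piecewise_Iic hg hrg)
    (hfr.trans (piecewise_eq_of_mem _ _ _ (mem_Iic.2 hab)).symm)

end Splice

section Action

variable {N : ℕ} {V : Euc N → ℝ} {c a b : ℝ} {q q' r r' : ℝ → Euc N} {Vm Vp : Set (Euc N)}

/-- The integrand `½‖q'‖² + V(q) - c` of the functional `J_c`. -/
def lagrangian (V : Euc N → ℝ) (c : ℝ) (q q' : ℝ → Euc N) (t : ℝ) : ℝ :=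
  2⁻¹ * ‖q' t‖ ^ 2 + (V (q t) - c)

/-- The real-valued counterpart of `J_{c,[a,b]}(q)`; it agrees with `lagJ` when `V ∘ q ≥ c` on
`[a, b]` and needs no truncation of the integrand at `0`. -/
def arcAction (V : Euc N → ℝ) (c : ℝ) (q q' : ℝ → Euc N) (a b : ℝ) : ℝ :=
  ∫ t in a..b, lagrangian V c q q' t

theorem lagrangian_nonneg {t : ℝ} (h : c ≤ V (q t)) : 0 ≤ lagrangian V c q q' t :=
  add_nonneg (by positivity) (sub_nonneg.2 h)

theorem IsH1loc.continuous_comp_sub_const (h : IsH1loc q q') (hV : Continuous V) :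
    Continuous fun t => V (q t) - c :=
  (hV.comp h.continuous).sub continuous_const

theorem IsH1loc.intervalIntegrable_lagrangian (h : IsH1loc q q') (hV : Continuous V) (a b : ℝ) :
    IntervalIntegrable (lagrangian V c q q') volume a b :=
  ((h.intervalIntegrable_norm_sq a b).const_mul _).add
    ((h.continuous_comp_sub_const hV).intervalIntegrable a b)

theorem IsH1loc.arcAction_eq_add (h : IsH1loc q q') (hV : Continuous V) (a b : ℝ) :
    arcAction V c q q' a b =
      (∫ t in a..b, 2⁻¹ * ‖q' t‖ ^ 2) + ∫ t in a..b, (V (q t) - c) :=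
  intervalIntegral.integral_add ((h.intervalIntegrable_norm_sq a b).const_mul _)
    ((h.continuous_comp_sub_const hV).intervalIntegrable a b)

theorem IsH1loc.arcAction_comp_mul_add (h : IsH1loc q q') (hV : Continuous V) {k : ℝ}
    (hk : k ≠ 0) (d a b : ℝ) :
    arcAction V c (fun t => q (k * t + d)) (fun t => k • q' (k * t + d)) a b =
      k * (∫ t in (k * a + d)..(k * b + d), 2⁻¹ * ‖q' t‖ ^ 2) +
        k⁻¹ * ∫ t in (k * a + d)..(k * b + d), (V (q t) - c) := by
  have hkin : IntervalIntegrable (fun t => k ^ 2 * (2⁻¹ * ‖q' t‖ ^ 2)) volume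
      (k * a + d) (k * b + d) :=
    ((h.intervalIntegrable_norm_sq _ _).const_mul _).const_mul _
  calc arcAction V c (fun t => q (k * t + d)) (fun t => k • q' (k * t + d)) a b
      = ∫ t in a..b, (fun s => k ^ 2 * (2⁻¹ * ‖q' s‖ ^ 2) + (V (q s) - c)) (k * t + d) := by
        simp only [arcAction, lagrangian, norm_smul, mul_pow, Real.norm_eq_abs, sq_abs,
          mul_left_comm]
    _ = k⁻¹ * ∫ t in (k * a + d)..(k * b + d), (k ^ 2 * (2⁻¹ * ‖q' t‖ ^ 2) + (V (q t) - c)) :=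
        intervalIntegral.integral_comp_mul_add
          (fun s => k ^ 2 * (2⁻¹ * ‖q' s‖ ^ 2) + (V (q s) - c)) hk d
    _ = k * (∫ t in (k * a + d)..(k * b + d), 2⁻¹ * ‖q' t‖ ^ 2) +
          k⁻¹ * ∫ t in (k * a + d)..(k * b + d), (V (q t) - c) := by
        rw [intervalIntegral.integral_add hkin
          ((h.continuous_comp_sub_const hV).intervalIntegrable _ _),
          intervalIntegral.integral_const_mul]
        field_simp

theorem arcAction_nonneg (hab : a ≤ b) (h : ∀ t ∈ Icc a b, c ≤ V (q t)) :
    0 ≤ arcAction V c q q' a b :=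
  intervalIntegral.integral_nonneg hab fun t ht => lagrangian_nonneg (h t ht)

theorem lagJ_Ioc_eq_ofReal_arcAction (hq : IsH1loc q q') (hV : Continuous V) (hab : a ≤ b)
    (h : ∀ t ∈ Icc a b, c ≤ V (q t)) :
    lagJ V c q q' (Ioc a b) = ENNReal.ofReal (arcAction V c q q' a b) := by
  rw [arcAction, intervalIntegral.integral_of_le hab, ofReal_integral_eq_lintegral_ofReal]
  · rfl
  · exact (hq.intervalIntegrable_lagrangian hV a b).1
  · exact (ae_restrict_mem measurableSet_Ioc).mono fun t ht =>
      lagrangian_nonneg (h t (Ioc_subset_Icc_self ht))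

theorem lagJ_Ioc_ne_top (hq : IsH1loc q q') (hV : Continuous V) (a b : ℝ) :
    lagJ V c q q' (Ioc a b) ≠ ⊤ :=
  Integrable.lintegral_lt_top (hq.intervalIntegrable_lagrangian hV a b).1 |>.ne

theorem lagJ_congr {I : Set ℝ} (hI : MeasurableSet I) (h : EqOn q r I) (h' : EqOn q' r' I) :
    lagJ V c q q' I = lagJ V c r r' I :=
  setLIntegral_congr_fun hI fun t ht => by simp only [h ht, h' ht]

theorem lagJ_const_eq_zero {x : Euc N} (hx : V x = c) (I : Set ℝ) :
    lagJ V c (fun _ => x) (fun _ => 0) I = 0 := by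
  simp [lagJ, hx]

theorem lagJ_univ_eq_add (hab : a ≤ b) :
    lagJ V c q q' univ =
      lagJ V c q q' (Iic a) + lagJ V c q q' (Ioc a b) + lagJ V c q q' (Ioi b) := by
  simp only [lagJ]
  rw [← lintegral_union measurableSet_Ioc (Iic_disjoint_Ioc le_rfl), Iic_union_Ioc_eq_Iic hab,
    ← lintegral_union measurableSet_Ioi (Iic_disjoint_Ioi le_rfl), Iic_union_Ioi]

theorem lagJ_comp_add_right (b d : ℝ) :
    lagJ V c (fun t => q (t + d)) (fun t => q' (t + d)) (Ioi b) = lagJ V c q q' (Ioi (b + d)) := by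
  simpa [lagJ] using (measurePreserving_add_right volume d).setLIntegral_comp_preimage_emb
    (measurableEmbedding_addRight d)
    (fun t => ENNReal.ofReal (2⁻¹ * ‖q' t‖ ^ 2 + (V (q t) - c))) (Ioi (b + d))

theorem mc_le_lagJ_splice {f f' g g' : ℝ → Euc N} (hab : a ≤ b)
    (hf : IsH1loc f f') (hr : IsH1loc r r') (hg : IsH1loc g g') (hfr : f a = r a) (hrg : r b = g b)
    (hVf : ∀ t ≤ a, c ≤ V (f t)) (hVr : ∀ t ∈ Icc a b, c ≤ V (r t)) (hVg : ∀ t ≥ b, c ≤ V (g t))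
    (hfm : ∀ ε > 0, ∃ᶠ t in atBot, infDist (f t) Vm < ε)
    (hgp : ∀ ε > 0, ∃ᶠ t in atTop, infDist (g t) Vp < ε) :
    mc V c Vm Vp ≤ lagJ V c f f' (Iic a) + lagJ V c r r' (Ioc a b) + lagJ V c g g' (Ioi b) := by
  have hmem : (splice a b f r g, splice a b f' r' g') ∈ Gamma V c Vm Vp := by
    refine ⟨hf.splice hab hr hg hfr hrg, fun t => ?_, fun ε hε => ?_, fun ε hε => ?_⟩
    · rcases le_or_gt t a with hta | hta
      · simpa only [splice_eqOn_Iic (mem_Iic.2 hta)] using hVf t hta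
      rcases le_or_gt t b with htb | htb
      · simpa only [splice_eqOn_Ioc ⟨hta, htb⟩] using hVr t ⟨hta.le, htb⟩
      · simpa only [splice_eqOn_Ioi hab htb] using hVg t htb.le
    · refine ((hfm ε hε).and_eventually (eventually_le_atBot a)).mono fun t ht => ?_
      simpa only [splice_eqOn_Iic (mem_Iic.2 ht.2)] using ht.1
    · refine ((hgp ε hε).and_eventually (eventually_gt_atTop b)).mono fun t ht => ?_
      simpa only [splice_eqOn_Ioi hab ht.2] using ht.1
  refine (iInf₂_le _ hmem).trans_eq ?_
  rw [lagJ_univ_eq_add hab, lagJ_congr measurableSet_Iic splice_eqOn_Iic splice_eqOn_Iic,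
    lagJ_congr measurableSet_Ioc splice_eqOn_Ioc splice_eqOn_Ioc,
    lagJ_congr measurableSet_Ioi (splice_eqOn_Ioi hab) (splice_eqOn_Ioi hab)]

end Action

section SetDist

variable {E : Type*} [PseudoMetricSpace E] {A B : Set E} {x y : E}

theorem setDist_le_dist (hx : x ∈ A) (hy : y ∈ B) : setDist A B ≤ dist x y :=
  csInf_le ⟨0, by rintro _ ⟨p, -, rfl⟩; exact dist_nonneg⟩ ⟨(x, y), ⟨hx, hy⟩, rfl⟩

theorem nonempty_prod_of_setDist_pos (h : 0 < setDist A B) : (A ×ˢ B).Nonempty := by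
  by_contra! hempty
  simp [setDist, hempty] at h

end SetDist

section Finiteness

variable {N : ℕ} {V : Euc N → ℝ} {c : ℝ} {q q' : ℝ → Euc N} {Vm Vp : Set (Euc N)}

theorem exists_isH1loc_to_part_of_sublevel {A B : Set (Euc N)} {D : ℝ} {p : Euc N}
    (hV : Continuous V) (hsplit : {x | V x ≤ c} = A ∪ B) (hA : A.Nonempty)
    (hD : ∀ x ∈ A, ∀ y ∈ B, D ≤ dist x y) (hp : c ≤ V p) (hpA : infDist p A < D) :
    ∃ x ∈ A, V x = c ∧ ∃ r r' : ℝ → Euc N, IsH1loc r r' ∧ r 0 = p ∧ r 1 = x ∧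
      ∀ t ∈ Icc (0 : ℝ) 1, c ≤ V (r t) := by
  obtain ⟨x₀, hx₀, hpx₀⟩ := (infDist_lt_iff hA).1 hpA
  have hVx₀ : V x₀ ≤ c := hsplit.symm.subset (Or.inl hx₀)
  obtain ⟨s, hs, hVs, hline⟩ := exists_first_hit (u := fun t => V (AffineMap.lineMap p x₀ t))
    (a := (0 : ℝ)) (b := 1) (c := c) zero_le_one
    (hV.comp AffineMap.lineMap_continuous).continuousOn (by simpa using hp) (by simpa using hVx₀)
  set x : Euc N := AffineMap.lineMap p x₀ s with hx
  have hxA : x ∈ A := by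
    refine (hsplit.subset hVs.le).resolve_right fun hxB => ?_
    have hdist : dist x₀ x ≤ dist p x₀ := by
      rw [dist_comm, hx, dist_lineMap_right, Real.norm_of_nonneg (sub_nonneg.2 hs.2)]
      exact mul_le_of_le_one_left dist_nonneg (sub_le_self 1 hs.1)
    exact (hdist.trans_lt hpx₀).not_ge (hD x₀ hx₀ x hxB)
  refine ⟨x, hxA, hVs, AffineMap.lineMap p x, fun _ => x - p,
    .of_hasDerivAt (fun _ => AffineMap.hasDerivAt_lineMap) continuous_const,
    AffineMap.lineMap_apply_zero _ _, AffineMap.lineMap_apply_one _ _, fun t ht => ?_⟩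
  rw [hx, AffineMap.lineMap_lineMap_right]
  exact hline _ ⟨mul_nonneg ht.1 hs.1, mul_le_of_le_one_left hs.1 ht.2⟩

theorem mc_ne_top_of_arc {a b : ℝ} (hV : Continuous V) (hab : a ≤ b) (hq : IsH1loc q q')
    (ha : q a ∈ Vm) (hVa : V (q a) = c) (hb : q b ∈ Vp) (hVb : V (q b) = c)
    (hVq : ∀ t ∈ Icc a b, c ≤ V (q t)) : mc V c Vm Vp ≠ ⊤ := by
  refine ne_top_of_le_ne_top (lagJ_Ioc_ne_top (c := c) hq hV a b) ?_
  simpa only [lagJ_const_eq_zero hVa, lagJ_const_eq_zero hVb, zero_add, add_zero] using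
    mc_le_lagJ_splice hab (IsH1loc.const (q a)) hq (IsH1loc.const (q b)) rfl rfl
      (fun _ _ => hVa.ge) hVq (fun _ _ => hVb.ge)
      (fun ε hε => .of_forall fun _ => by rwa [infDist_zero_of_mem ha])
      (fun ε hε => .of_forall fun _ => by rwa [infDist_zero_of_mem hb])

theorem mc_ne_top (hV : Continuous V) (hsplit : {x | V x ≤ c} = Vm ∪ Vp)
    (hsep : 0 < setDist Vm Vp) (hq : (q, q') ∈ Gamma V c Vm Vp) : mc V c Vm Vp ≠ ⊤ := by
  obtain ⟨hqH, hqV, hqm, hqp⟩ := hq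
  obtain ⟨⟨y, z⟩, hy, hz⟩ := nonempty_prod_of_setDist_pos hsep
  obtain ⟨t₁, ht₁⟩ := (hqm _ hsep).exists
  obtain ⟨t₂, ht₂, ht₁₂⟩ := ((hqp _ hsep).and_eventually (eventually_ge_atTop t₁)).exists
  obtain ⟨x₁, hx₁, hVx₁, r₁, r₁', hr₁, hr₁0, rfl, hVr₁⟩ := exists_isH1loc_to_part_of_sublevel hV
    hsplit ⟨y, hy⟩ (fun _ hx _ hy => setDist_le_dist hx hy) (hqV t₁) ht₁
  obtain ⟨x₂, hx₂, hVx₂, r₂, r₂', hr₂, hr₂0, rfl, hVr₂⟩ := exists_isH1loc_to_part_of_sublevel hV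
    (hsplit.trans (union_comm _ _)) ⟨z, hz⟩
    (fun _ hx _ hy => (setDist_le_dist hy hx).trans_eq (dist_comm _ _)) (hqV t₂) ht₂
  have hr : IsH1loc (splice t₁ t₂ (fun t => r₁ (-1 * t + t₁)) q (fun t => r₂ (t + -t₂))) _ :=
    (hr₁.comp_mul_add (by norm_num) t₁).splice ht₁₂ hqH (hr₂.comp_add_right (-t₂))
      (by simpa using hr₁0) (by simpa using hr₂0.symm)
  have hleft : splice t₁ t₂ (fun t => r₁ (-1 * t + t₁)) q (fun t => r₂ (t + -t₂)) (t₁ - 1) =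
      r₁ 1 := by
    rw [splice_eqOn_Iic (mem_Iic.2 (sub_one_lt t₁).le)]
    ring_nf
  have hright : splice t₁ t₂ (fun t => r₁ (-1 * t + t₁)) q (fun t => r₂ (t + -t₂)) (t₂ + 1) =
      r₂ 1 := by
    rw [splice_eqOn_Ioi ht₁₂ (lt_add_one t₂)]
    ring_nf
  refine mc_ne_top_of_arc hV (by linarith) hr (hleft ▸ hx₁) (hleft ▸ hVx₁) (hright ▸ hx₂)
    (hright ▸ hVx₂) fun t ht => ?_
  rcases le_or_gt t t₁ with h₁ | h₁
  · rw [splice_eqOn_Iic (mem_Iic.2 h₁)]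
    exact hVr₁ _ ⟨by linarith, by linarith [ht.1]⟩
  rcases le_or_gt t t₂ with h₂ | h₂
  · rw [splice_eqOn_Ioc ⟨h₁, h₂⟩]
    exact hqV t
  · rw [splice_eqOn_Ioi ht₁₂ h₂]
    exact hVr₂ _ ⟨by linarith, by linarith [ht.2]⟩

end Finiteness

/-- `q` minimizes the action of `V - c` between any two of its points, among all arcs in
`{V ≥ c}` joining them in an arbitrary time. Translations of time leave the action unchanged, so the
competing arcs are required to start at the same time `a`, and only their final time `b'` is
free. -/
structure IsFreeTimeMinimizer {N : ℕ} (V : Euc N → ℝ) (c : ℝ) (q q' : ℝ → Euc N) : Prop where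
  isH1loc : IsH1loc q q'
  le_potential : ∀ t, c ≤ V (q t)
  arcAction_le : ∀ {a b b' : ℝ} {r r' : ℝ → Euc N}, a ≤ b → a ≤ b' → IsH1loc r r' →
    r a = q a → r b' = q b → (∀ t ∈ Icc a b', c ≤ V (r t)) →
      arcAction V c q q' a b ≤ arcAction V c r r' a b'

namespace IsFreeTimeMinimizer

variable {N : ℕ} {V : Euc N → ℝ} {c a b : ℝ} {q q' : ℝ → Euc N} {Vm Vp : Set (Euc N)}

theorem of_lagJ_eq_mc (hV : Continuous V) (hq : (q, q') ∈ Gamma V c Vm Vp)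
    (hmin : lagJ V c q q' univ = mc V c Vm Vp) (hfin : mc V c Vm Vp ≠ ⊤) :
    IsFreeTimeMinimizer V c q q' := by
  obtain ⟨hqH, hqV, hqm, hqp⟩ := hq
  refine ⟨hqH, hqV, fun {a b b' r r'} hab hab' hr hra hrb hVr => ?_⟩
  have htail : ∀ ε > 0, ∃ᶠ t in atTop, infDist (q (t + (b - b'))) Vp < ε := fun ε hε => by
    have hmap : map (fun t => t + (b - b')) atTop = atTop :=
      (OrderIso.addRight (b - b')).map_atTop
    exact frequently_map.1 (hmap.symm ▸ hqp ε hε)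
  have hsplice := mc_le_lagJ_splice hab' hqH hr (hqH.comp_add_right (b - b')) hra.symm
    (by simpa using hrb) (fun t _ => hqV t) hVr (fun t _ => hqV _) hqm htail
  rw [lagJ_comp_add_right, add_sub_cancel, ← hmin, lagJ_univ_eq_add hab] at hsplice
  rw [← hmin, lagJ_univ_eq_add hab] at hfin
  obtain ⟨⟨hfin_left, -⟩, hfin_right⟩ := by simpa only [ENNReal.add_ne_top] using hfin
  have hle : lagJ V c q q' (Ioc a b) ≤ lagJ V c r r' (Ioc a b') :=
    (ENNReal.add_le_add_iff_left hfin_left).1 ((ENNReal.add_le_add_iff_right hfin_right).1 hsplice)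
  rwa [lagJ_Ioc_eq_ofReal_arcAction hqH hV hab fun t _ => hqV t,
    lagJ_Ioc_eq_ofReal_arcAction hr hV hab' hVr,
    ENNReal.ofReal_le_ofReal_iff (arcAction_nonneg hab' hVr)] at hle

theorem integral_kinetic_eq_integral_potential (hq : IsFreeTimeMinimizer V c q q')
    (hV : Continuous V) (hab : a ≤ b) :
    ∫ t in a..b, 2⁻¹ * ‖q' t‖ ^ 2 = ∫ t in a..b, (V (q t) - c) := by
  refine eq_of_forall_add_le_mul_add_inv_mul fun k hk => ?_
  have hstart : k * a + (a - k * a) = a := by ring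
  have hend : k * (a + k⁻¹ * (b - a)) + (a - k * a) = b := by
    field_simp
    ring
  have hle := hq.arcAction_le hab
    (le_add_of_nonneg_right (mul_nonneg (inv_pos.2 hk).le (sub_nonneg.2 hab)))
    (hq.isH1loc.comp_mul_add hk.ne' (a - k * a)) (by rw [hstart]) (by rw [hend])
    fun t _ => hq.le_potential _
  rwa [hq.isH1loc.arcAction_eq_add hV, hq.isH1loc.arcAction_comp_mul_add hV hk.ne', hstart,
    hend] at hle

theorem first_variation_eq_zero (hq : IsFreeTimeMinimizer V c q q') (hV : ContDiff ℝ 1 V)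
    (hab : a ≤ b) (hVq : ∀ t ∈ Icc a b, c < V (q t)) {φ φ' : ℝ → Euc N} (hφ : IsH1loc φ φ')
    (hφa : φ a = 0) (hφb : φ b = 0) :
    (∫ t in a..b, inner ℝ (q' t) (φ' t)) + ∫ t in a..b, fderiv ℝ V (q t) (φ t) = 0 := by
  have hkin := hasDerivAt_integral_norm_add_smul_sq (hq.isH1loc.memLp_two_Ioc a b)
    (hφ.memLp_two_Ioc a b)
  have hpot := hasDerivAt_intervalIntegral_comp_add_smul (hV.sub (contDiff_const (c := c)))
    hq.isH1loc.continuous hφ.continuous a b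
  simp only [← intervalIntegral.integral_of_le hab] at hkin
  simp only [fderiv_sub_const] at hpot
  have hadm : ∀ᶠ s in 𝓝 (0 : ℝ), ∀ t ∈ Icc a b, c < V (q t + s • φ t) := by
    have hcont : Continuous fun z : ℝ × ℝ => V (q z.2 + z.1 • φ z.2) := by
      have := hV.continuous
      have := hq.isH1loc.continuous
      have := hφ.continuous
      fun_prop
    refine isCompact_Icc.eventually_forall_of_forall_eventually fun t ht => ?_
    exact hcont.continuousAt.eventually (lt_mem_nhds (by simpa using hVq t ht))
  have hmin : IsLocalMin (fun s : ℝ => arcAction V c (fun t => q t + s • φ t)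
      (fun t => q' t + s • φ' t) a b) 0 := by
    filter_upwards [hadm] with s hs
    simpa using hq.arcAction_le hab hab (hq.isH1loc.add_smul hφ s) (by simp [hφa])
      (by simp [hφb]) fun t ht => (hs t ht).le
  refine hmin.hasDerivAt_eq_zero ((hkin.fun_add hpot).congr_of_eventuallyEq <|
    .of_forall fun s => ?_)
  exact (hq.isH1loc.add_smul hφ s).arcAction_eq_add hV.continuous a b

theorem weak_euler_lagrange (hq : IsFreeTimeMinimizer V c q q') (hV : ContDiff ℝ 1 V)
    (hab : a ≤ b) (hVq : ∀ t ∈ Icc a b, c < V (q t)) {φ η : ℝ → ℝ} (hη : Continuous η)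
    (hφ : ∀ t, HasDerivAt φ (η t) t) (hφa : φ a = 0) (hφb : φ b = 0) :
    (∫ t in a..b, η t • q' t) + ∫ t in a..b, φ t • gradient V (q t) = 0 := by
  refine ext_inner_left ℝ fun v => ?_
  have hvar := hq.first_variation_eq_zero hV hab hVq (φ := fun t => φ t • v)
    (φ' := fun t => η t • v) (.of_hasDerivAt (fun t => (hφ t).smul_const v) (by fun_prop))
    (by simp [hφa]) (by simp [hφb])
  have hkin : IntervalIntegrable (fun t => η t • q' t) volume a b :=
    (hq.isH1loc.intervalIntegrable a b).continuousOn_smul hη.continuousOn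
  have hφc : Continuous φ := continuous_iff_continuousAt.2 fun t => (hφ t).continuousAt
  have hpot : IntervalIntegrable (fun t => φ t • gradient V (q t)) volume a b :=
    (hφc.smul ((continuous_gradient_of_contDiff hV).comp
      hq.isH1loc.continuous)).intervalIntegrable a b
  rw [inner_add_right, inner_zero_right, ← innerSL_apply_apply ℝ, ← innerSL_apply_apply ℝ,
    ← ContinuousLinearMap.intervalIntegral_comp_comm _ hkin,
    ← ContinuousLinearMap.intervalIntegral_comp_comm _ hpot]
  simpa only [innerSL_apply_apply, inner_smul_right, real_inner_comm v, inner_gradient_right,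
    conj_trivial, map_smul, smul_eq_mul] using hvar

theorem exists_continuous_ae_eq_deriv (hq : IsFreeTimeMinimizer V c q q') (hV : ContDiff ℝ 1 V)
    (hab : a < b) (hVq : ∀ t ∈ Icc a b, c < V (q t)) :
    ∃ u : ℝ → Euc N, Continuous u ∧ ∀ᵐ t, t ∈ Ioo a b → q' t = u t := by
  have hforce : Continuous fun t => gradient V (q t) :=
    (continuous_gradient_of_contDiff hV).comp hq.isH1loc.continuous
  obtain ⟨m, hm⟩ := exists_ae_eq_const_add_integral_of_weak_deriv hab
    (hq.isH1loc.intervalIntegrable a b) hforce fun φ η => hq.weak_euler_lagrange hV hab.le hVq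
  exact ⟨_, continuous_const.add (intervalIntegral.continuous_primitive
    (fun s t => hforce.intervalIntegrable s t) a), hm⟩

theorem energy_eq (hq : IsFreeTimeMinimizer V c q q') (hV : ContDiff ℝ 1 V) {t : ℝ}
    (ht : c < V (q t)) : 2⁻¹ * ‖deriv q t‖ ^ 2 - V (q t) = -c := by
  have hVq : Continuous fun s => V (q s) := hV.continuous.comp hq.isH1loc.continuous
  obtain ⟨δ, hδ, hVδ⟩ :=
    (nhds_basis_Icc_pos t).eventually_iff.1 (hVq.continuousAt.eventually (lt_mem_nhds ht))
  have htδ : t ∈ Ioo (t - δ) (t + δ) := ⟨sub_lt_self t hδ, lt_add_of_pos_right t hδ⟩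
  obtain ⟨u, hu, hqu⟩ :=
    hq.exists_continuous_ae_eq_deriv hV (htδ.1.trans htδ.2) fun s hs => hVδ hs
  have hderiv : HasDerivAt q (u t) t :=
    ((hasDerivAt_integral_of_ae_eq hu hqu htδ).const_add (q (t - δ))).congr_of_eventuallyEq
      (.of_forall (hq.isH1loc.eq_add_integral _))
  have hkin : HasDerivAt (fun s => ∫ r in (t - δ)..s, 2⁻¹ * ‖q' r‖ ^ 2) (2⁻¹ * ‖u t‖ ^ 2) t :=
    hasDerivAt_integral_of_ae_eq (w := fun s => 2⁻¹ * ‖u s‖ ^ 2) (by fun_prop)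
      (hqu.mono fun s hs hsδ => by rw [hs hsδ]) htδ
  have hpot : HasDerivAt (fun s => ∫ r in (t - δ)..s, 2⁻¹ * ‖q' r‖ ^ 2) (V (q t) - c) t := by
    refine ((hVq.sub continuous_const).integral_hasStrictDerivAt (t - δ) t).hasDerivAt
      |>.congr_of_eventuallyEq ?_
    filter_upwards [Ioi_mem_nhds htδ.1] with s hs
    exact hq.integral_kinetic_eq_integral_potential hV.continuous (le_of_lt hs)
  rw [hderiv.deriv, hkin.unique hpot]
  ring

end IsFreeTimeMinimizer

theorem lt_potential_of_alphaQ_lt_of_lt_omegaQ {N : ℕ} {V : Euc N → ℝ} {c : ℝ}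
    {Vm Vp : Set (Euc N)} (hsplit : {x | V x ≤ c} = Vm ∪ Vp) {q : ℝ → Euc N} {t : ℝ}
    (hα : alphaQ Vm q < t) (hω : t < omegaQ Vm Vp q) : c < V (q t) := by
  by_contra! hle
  rcases hsplit.subset hle with hm | hp
  · exact hα.not_ge (le_sSup ⟨t, rfl, hm⟩)
  · exact hω.not_ge (sInf_le ⟨t, rfl, hα, hp⟩)

theorem minimizer_energy_general {N : ℕ} {V : Euc N → ℝ} (hV : ContDiff ℝ 1 V) {c : ℝ}
    {Vm Vp : Set (Euc N)} (hsplit : {x | V x ≤ c} = Vm ∪ Vp) (hsep : 0 < setDist Vm Vp)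
    {q q' : ℝ → Euc N} (hq : (q, q') ∈ Gamma V c Vm Vp)
    (hmin : lagJ V c q q' univ = mc V c Vm Vp) {t : ℝ} (ht : c < V (q t)) :
    2⁻¹ * ‖deriv q t‖ ^ 2 - V (q t) = -c :=
  have hfin : mc V c Vm Vp ≠ ⊤ := mc_ne_top hV.continuous hsplit hsep hq
  (IsFreeTimeMinimizer.of_lagJ_eq_mc hV.continuous hq hmin hfin).energy_eq hV ht

/-- Lemma 2.9 (energy identity): a minimizer has constant mechanical energy `−c`
on its connecting time interval. -/
theorem minimizer_energy {N : ℕ} (hN : 0 < N) (V : Euc N → ℝ) (hV : ContDiff ℝ 1 V)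
    (c : ℝ) (Vm Vp : Set (Euc N)) (hVm : IsClosed Vm) (hVp : IsClosed Vp)
    (hsplit : {x | V x ≤ c} = Vm ∪ Vp) (hsep : 0 < setDist Vm Vp)
    (R : ℝ) (hR : 0 < R) (hcoer : Coercive V c Vm Vp R)
    (q q' : ℝ → Euc N) (hq : MemM V c Vm Vp R q q') :
    ∀ t : ℝ, alphaQ Vm q < (t : EReal) → (t : EReal) < omegaQ Vm Vp q →
      2⁻¹ * ‖deriv q t‖ ^ 2 - V (q t) = -c := fun _ hα hω =>
  minimizer_energy_general hV hsplit hsep hq.1 hq.2.2.1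
    (lt_potential_of_alphaQ_lt_of_lt_omegaQ hsplit hα hω)
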